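/- Let η > 0 and v(p) = p/√(1+p²). Let f : ℝ × ℝ × ℝ → ℝ be continuously differentiable, 1-periodic in its second argument, with f(t,x,p) = 0 whenever |p| ≥ P for some P > 0; define ρ(t,x) := ∫_ℝ f(t,x,p) dp and j(t,x) := ∫_ℝ v(p)·f(t,x,p) dp. Let A, B, 𝓔, E : ℝ × ℝ → ℝ be continuously differentiable and 1-periodic in their second argument, and assume at every point: the Vlasov equation ∂f/∂t + v(p)·∂f/∂x + F·∂f/∂p = 0 with F = −(E + A·B); the Maxwell equations ∂A/∂t = −𝓔, B = ∂A/∂x, ∂B/∂t = −∂𝓔/∂x, ∂𝓔/∂t = η⁻²·A·ρ − ∂B/∂x; and the Ampère relation ∂E/∂t = η⁻²·j. Then the total energy W(t) := (1/2)∫₀¹ A²ρ dx + (η²/2)∫₀¹ (𝓔² + B²) dx + ∫₀¹∫_ℝ (√(1+p²) − 1) f dp dx + (η²/2)∫₀¹ E² dx is constant in t. -/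

import Mathlib

open MeasureTheory

/-!
The energy density
`u = ½ A² ρ + (η²/2)(𝓔² + B²) + ∫ K f dp + (η²/2) E²`, with `K(p) = √(1+p²) - 1`, satisfies the
local conservation law `∂ₜ u + ∂ₓ g = 0` with the flux
`g = ½ A² j + η² 𝓔 B + ∫ K v f dp`,
which is periodic in `x`, so the integral of `u` over a period does not depend on time.

The law is the sum of two balances that exchange the power `A B j`: the transverse one rests on the
continuity equation `∂ₜ ρ + ∂ₓ j = 0`, the longitudinal one on the work of the force,
`∂ₜ ∫ K f + ∂ₓ ∫ K v f = F j`. Both are moments `∫ w f dp` of the Vlasov equation: integrating by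
parts in `p` gives `∂ₜ ∫ w f + ∂ₓ ∫ w v f = F ∫ w' f`, used with `w = 1` and with `w = K`, for
which `K' = v`.
-/

section ConservationLaw

variable {F : Type*} [NormedAddCommGroup F] [NormedSpace ℝ F] {a b : ℝ}

lemma hasDerivAt_intervalIntegral_of_continuous_deriv {h h' : ℝ → ℝ → F}
    (hh : ∀ s, Continuous (h s)) (hh' : Continuous (Function.uncurry h'))
    (hderiv : ∀ s y, HasDerivAt (fun r => h r y) (h' s y) s) (s₀ : ℝ) :
    HasDerivAt (fun s => ∫ y in a..b, h s y) (∫ y in a..b, h' s₀ y) s₀ := by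
  obtain ⟨C, hC⟩ := ((isCompact_closedBall s₀ 1).prod
    (isCompact_uIcc (a := a) (b := b))).exists_bound_of_continuousOn hh'.continuousOn
  exact (intervalIntegral.hasDerivAt_integral_of_dominated_loc_of_deriv_le (bound := fun _ => C)
    (Metric.closedBall_mem_nhds s₀ one_pos)
    (.of_forall fun s => (hh s).aestronglyMeasurable)
    ((hh s₀).intervalIntegrable _ _)
    (hh'.uncurry_left s₀).aestronglyMeasurable
    (.of_forall fun y hy s hs => hC (s, y) ⟨hs, Set.uIoc_subset_uIcc hy⟩)
    intervalIntegrable_const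
    (.of_forall fun y _ s _ => hderiv s y)).2

lemma hasDerivAt_deriv_of_contDiff {g : ℝ → F} (hg : ContDiff ℝ 1 g) (t : ℝ) :
    HasDerivAt g (deriv g t) t :=
  (hg.differentiable one_ne_zero t).hasDerivAt

lemma hasDerivAt_partial_fst {g : ℝ × ℝ → F} (hg : ContDiff ℝ 1 g) (t x : ℝ) :
    HasDerivAt (fun s => g (s, x)) (deriv (fun s => g (s, x)) t) t :=
  hasDerivAt_deriv_of_contDiff (by fun_prop) t

lemma hasDerivAt_partial_snd {g : ℝ × ℝ → F} (hg : ContDiff ℝ 1 g) (t x : ℝ) :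
    HasDerivAt (fun y => g (t, y)) (deriv (fun y => g (t, y)) x) x :=
  hasDerivAt_deriv_of_contDiff (by fun_prop) x

lemma continuous_deriv_of_contDiff_param {Z : Type*} [NormedAddCommGroup Z] [NormedSpace ℝ Z]
    {g : Z → ℝ → F} {c : Z → ℝ} (hg : ContDiff ℝ 1 fun q : Z × ℝ => g q.1 q.2)
    (hc : Continuous c) : Continuous fun z => deriv (g z) (c z) :=
  (Continuous.fderiv_one hg hc).clm_apply continuous_const

lemma intervalIntegral_eq_of_conservation_law [CompleteSpace F] {u g : ℝ × ℝ → F}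
    (hu : ContDiff ℝ 1 u) (hg : ContDiff ℝ 1 g)
    (hlaw : ∀ t x, deriv (fun s => u (s, x)) t + deriv (fun y => g (t, y)) x = 0)
    (hflux : ∀ t, g (t, b) = g (t, a)) (t₁ t₂ : ℝ) :
    ∫ x in a..b, u (t₁, x) = ∫ x in a..b, u (t₂, x) := by
  have integral_deriv_eq_zero (t : ℝ) : ∫ x in a..b, deriv (fun s => u (s, x)) t = 0 := by
    have continuous_flux : Continuous (deriv fun y => g (t, y)) :=
      ContDiff.continuous_deriv_one (by fun_prop)
    simp only [fun x => eq_neg_of_add_eq_zero_left (hlaw t x)]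
    rw [intervalIntegral.integral_neg, intervalIntegral.integral_eq_sub_of_hasDerivAt
      (fun x _ => hasDerivAt_partial_snd hg t x) (continuous_flux.intervalIntegrable _ _),
      hflux, sub_self, neg_zero]
  have hderiv (t : ℝ) : HasDerivAt (fun s => ∫ x in a..b, u (s, x)) 0 t := by
    rw [← integral_deriv_eq_zero t]
    exact hasDerivAt_intervalIntegral_of_continuous_deriv
      (h' := fun t x => deriv (fun s => u (s, x)) t)
      (fun s => by fun_prop)
      (continuous_deriv_of_contDiff_param (g := fun (z : ℝ × ℝ) s => u (s, z.2))
        (by fun_prop) continuous_fst)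
      (hasDerivAt_partial_fst hu) t
  exact is_const_of_deriv_eq_zero (fun t => (hderiv t).differentiableAt)
    (fun t => (hderiv t).deriv) t₁ t₂

end ConservationLaw

section WeightedIntegral

variable {P : ℝ} {w : ℝ → ℝ}

lemma hasCompactSupport_of_forall_le_abs {g : ℝ → ℝ} (hg : ∀ p, P ≤ |p| → g p = 0) :
    HasCompactSupport g :=
  .intro isCompact_Icc fun p hp => hg p (not_le.1 (mt abs_le.1 hp)).le

lemma contDiff_integral_mul {Z : Type*} [NormedAddCommGroup Z] [NormedSpace ℝ Z] {n : ℕ∞}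
    {g : Z → ℝ → ℝ} {k : Set ℝ} (hw : LocallyIntegrable w)
    (hg : ContDiff ℝ n fun q : Z × ℝ => g q.1 q.2) (hk : IsCompact k)
    (hsupp : ∀ z, ∀ p ∉ k, g z p = 0) :
    ContDiff ℝ n fun z => ∫ p, w p * g z p := by
  -- The integral is the value at `0` of the convolution of `w` with `q ↦ g z (-q)`.
  have hconv := contDiffOn_convolution_right_with_param (n := n) (ContinuousLinearMap.mul ℝ ℝ)
    (g := fun z q => g z (-q)) isOpen_univ hk.neg
    (fun z q _ hq => hsupp z (-q) (by simpa using hq)) hw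
    (hg.comp (contDiff_fst.prodMk contDiff_snd.neg)).contDiffOn
  rw [Set.univ_prod_univ, contDiffOn_univ] at hconv
  simpa [Function.comp_def, convolution_def] using
    hconv.comp (contDiff_id.prodMk (contDiff_const (c := (0 : ℝ))))

lemma integrable_mul_deriv_param {g : ℝ → ℝ → ℝ} (hw : Continuous w)
    (hg : ContDiff ℝ 1 fun q : ℝ × ℝ => g q.1 q.2) (hsupp : ∀ s p, P ≤ |p| → g s p = 0) (s : ℝ) :
    Integrable fun p => w p * deriv (fun r => g r p) s := by
  have hcont : Continuous fun p => deriv (fun r => g r p) s :=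
    continuous_deriv_of_contDiff_param (by fun_prop) continuous_const
  have hcompact : HasCompactSupport fun p => deriv (fun r => g r p) s :=
    hasCompactSupport_of_forall_le_abs (P := P) fun p hp => by simp [fun r => hsupp r p hp]
  exact (hw.mul hcont).integrable_of_hasCompactSupport hcompact.mul_left

lemma hasDerivAt_integral_mul {g : ℝ → ℝ → ℝ} (hw : Continuous w)
    (hg : ContDiff ℝ 1 fun q : ℝ × ℝ => g q.1 q.2) (hsupp : ∀ s p, P ≤ |p| → g s p = 0) (s : ℝ) :
    HasDerivAt (fun r => ∫ p, w p * g r p) (∫ p, w p * deriv (fun r => g r p) s) s := by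
  have integral_eq {h : ℝ → ℝ} (hh : ∀ p, P ≤ |p| → h p = 0) :
      ∫ p, w p * h p = ∫ p in (-P)..P, w p * h p := by
    refine (intervalIntegral.integral_eq_integral_of_support_subset fun p hp => ?_).symm
    have hpP : |p| < P := not_le.1 fun hle => hp (by simp [hh p hle])
    exact ⟨(abs_lt.1 hpP).1, (abs_lt.1 hpP).2.le⟩
  have hcont : Continuous fun q : ℝ × ℝ => deriv (fun r => g r q.2) q.1 :=
    continuous_deriv_of_contDiff_param (g := fun (z : ℝ × ℝ) r => g r z.2) (by fun_prop)
      continuous_fst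
  simp only [fun r => integral_eq (hsupp r)]
  rw [integral_eq fun p hp => by simp [fun r => hsupp r p hp]]
  exact hasDerivAt_intervalIntegral_of_continuous_deriv
    (h' := fun r p => w p * deriv (fun r => g r p) r)
    (fun r => hw.mul (hg.continuous.uncurry_left r))
    ((hw.comp continuous_snd).mul hcont)
    (fun r p => (hasDerivAt_partial_fst hg r p).const_mul (w p)) s

lemma integral_mul_deriv_eq_neg_of_hasCompactSupport {g : ℝ → ℝ} (hw : ContDiff ℝ 1 w)
    (hg : ContDiff ℝ 1 g) (hsupp : HasCompactSupport g) :
    ∫ p, w p * deriv g p = -∫ p, deriv w p * g p :=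
  integral_mul_deriv_eq_deriv_mul_of_integrable
    (fun p _ => hasDerivAt_deriv_of_contDiff hw p) (fun p _ => hasDerivAt_deriv_of_contDiff hg p)
    ((hw.continuous.mul (hg.continuous_deriv le_rfl)).integrable_of_hasCompactSupport
      hsupp.deriv.mul_left)
    (((hw.continuous_deriv le_rfl).mul hg.continuous).integrable_of_hasCompactSupport
      hsupp.mul_left)
    ((hw.continuous.mul hg.continuous).integrable_of_hasCompactSupport hsupp.mul_left)

end WeightedIntegral

section Moments

/-- The moment `∫ w(p) f(t, x, p) dp` of a phase-space density, as a function of `z = (t, x)`. The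
charge density `ρ` and the current `j` are the moments with weights `1` and `v`. -/
noncomputable def moment (w : ℝ → ℝ) (f : ℝ × ℝ × ℝ → ℝ) (z : ℝ × ℝ) : ℝ :=
  ∫ p, w p * f (z.1, z.2, p)

variable {f : ℝ × ℝ × ℝ → ℝ} {P : ℝ} {w v : ℝ → ℝ}

lemma moment_one (f : ℝ × ℝ × ℝ → ℝ) (t x : ℝ) : moment 1 f (t, x) = ∫ p, f (t, x, p) := by
  simp [moment]

lemma moment_zero (f : ℝ × ℝ × ℝ → ℝ) (z : ℝ × ℝ) : moment 0 f z = 0 := by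
  simp [moment]

lemma contDiff_moment (hf : ContDiff ℝ 1 f) (hsupp : ∀ t x p, P ≤ |p| → f (t, x, p) = 0)
    (hw : Continuous w) : ContDiff ℝ 1 (moment w f) :=
  contDiff_integral_mul (n := 1) (g := fun (z : ℝ × ℝ) p => f (z.1, z.2, p))
    hw.locallyIntegrable (by fun_prop) isCompact_Icc
    fun z p hp => hsupp z.1 z.2 p (not_le.1 (mt abs_le.1 hp)).le

lemma periodic_moment {L : ℝ} (w : ℝ → ℝ)
    (hf : ∀ t p, Function.Periodic (fun x => f (t, x, p)) L) (t : ℝ) :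
    Function.Periodic (fun x => moment w f (t, x)) L := fun x =>
  integral_congr_ae (.of_forall fun p => congrArg (w p * ·) (hf t p x))

theorem vlasov_moment {t x F : ℝ} (hf : ContDiff ℝ 1 f)
    (hsupp : ∀ t x p, P ≤ |p| → f (t, x, p) = 0) (hv : Continuous v) (hw : ContDiff ℝ 1 w)
    (hvlasov : ∀ p, deriv (fun s => f (s, x, p)) t + v p * deriv (fun y => f (t, y, p)) x
      + F * deriv (fun q => f (t, x, q)) p = 0) :
    deriv (fun s => moment w f (s, x)) t + deriv (fun y => moment (w * v) f (t, y)) x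
      = F * moment (deriv w) f (t, x) := by
  have hwv : Continuous (w * v) := hw.continuous.mul hv
  have hslice_time : ContDiff ℝ 1 fun q : ℝ × ℝ => f (q.1, x, q.2) := by fun_prop
  have hslice_space : ContDiff ℝ 1 fun q : ℝ × ℝ => f (t, q.1, q.2) := by fun_prop
  have hsupp_time (s p : ℝ) : P ≤ |p| → f (s, x, p) = 0 := hsupp s x p
  calc deriv (fun s => moment w f (s, x)) t + deriv (fun y => moment (w * v) f (t, y)) x
      = (∫ p, w p * deriv (fun s => f (s, x, p)) t)
          + ∫ p, (w * v) p * deriv (fun y => f (t, y, p)) x :=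
        congrArg₂ (· + ·) (hasDerivAt_integral_mul hw.continuous hslice_time hsupp_time t).deriv
          (hasDerivAt_integral_mul hwv hslice_space (hsupp t) x).deriv
    _ = ∫ p, (w p * deriv (fun s => f (s, x, p)) t
          + (w * v) p * deriv (fun y => f (t, y, p)) x) :=
        (integral_add (integrable_mul_deriv_param hw.continuous hslice_time hsupp_time t)
          (integrable_mul_deriv_param hwv hslice_space (hsupp t) x)).symm
    _ = ∫ p, -F * (w p * deriv (fun q => f (t, x, q)) p) := by
        congr with p
        simp only [Pi.mul_apply]
        linear_combination w p * hvlasov p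
    _ = F * moment (deriv w) f (t, x) := by
        rw [integral_const_mul, integral_mul_deriv_eq_neg_of_hasCompactSupport hw (by fun_prop)
          (hasCompactSupport_of_forall_le_abs (hsupp t x)), neg_mul_neg]
        rfl

end Moments

/-- A `C¹` solution, supported in `|p| < P`, of the Vlasov–Maxwell system with coupling parameter
`η`, for particles with kinetic energy `K p` and velocity `v = K'`. `Etr` is the transverse
electric field `𝓔` and `E` the electrostatic one. -/
structure IsVlasovMaxwellSolution (η P : ℝ) (K : ℝ → ℝ) (f : ℝ × ℝ × ℝ → ℝ)
    (A B Etr E : ℝ × ℝ → ℝ) : Prop where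
  contDiff_f : ContDiff ℝ 1 f
  eq_zero_of_le_abs : ∀ t x p, P ≤ |p| → f (t, x, p) = 0
  contDiff_A : ContDiff ℝ 1 A
  contDiff_B : ContDiff ℝ 1 B
  contDiff_Etr : ContDiff ℝ 1 Etr
  contDiff_E : ContDiff ℝ 1 E
  vlasov : ∀ t x p, deriv (fun s => f (s, x, p)) t + deriv K p * deriv (fun y => f (t, y, p)) x
    + (-(E (t, x) + A (t, x) * B (t, x))) * deriv (fun q => f (t, x, q)) p = 0
  deriv_time_A : ∀ t x, deriv (fun s => A (s, x)) t = -Etr (t, x)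
  B_eq_deriv_space_A : ∀ t x, B (t, x) = deriv (fun y => A (t, y)) x
  faraday : ∀ t x, deriv (fun s => B (s, x)) t = -deriv (fun y => Etr (t, y)) x
  ampere_transverse : ∀ t x, deriv (fun s => Etr (s, x)) t =
    η⁻¹ ^ 2 * A (t, x) * (∫ p, f (t, x, p)) - deriv (fun y => B (t, y)) x
  ampere_longitudinal : ∀ t x, deriv (fun s => E (s, x)) t =
    η⁻¹ ^ 2 * ∫ p, deriv K p * f (t, x, p)

/-- The total energy at time `t` over the period `[0, L]`: transverse kinetic, transverse potential,
longitudinal kinetic and longitudinal potential. -/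
noncomputable def totalEnergy (η L : ℝ) (K : ℝ → ℝ) (f : ℝ × ℝ × ℝ → ℝ) (A B Etr E : ℝ × ℝ → ℝ)
    (t : ℝ) : ℝ :=
  (1 / 2) * (∫ x in (0 : ℝ)..L, A (t, x) ^ 2 * ∫ p, f (t, x, p))
    + (η ^ 2 / 2) * (∫ x in (0 : ℝ)..L, (Etr (t, x) ^ 2 + B (t, x) ^ 2))
    + (∫ x in (0 : ℝ)..L, ∫ p, K p * f (t, x, p))
    + (η ^ 2 / 2) * ∫ x in (0 : ℝ)..L, E (t, x) ^ 2

/-- The transverse part `½ A² ρ + (η²/2)(𝓔² + B²)` of the energy density. -/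
noncomputable def transverseEnergyDensity (η : ℝ) (f : ℝ × ℝ × ℝ → ℝ) (A B Etr : ℝ × ℝ → ℝ)
    (z : ℝ × ℝ) : ℝ :=
  (1 / 2) * (A z ^ 2 * moment 1 f z) + (η ^ 2 / 2) * (Etr z ^ 2 + B z ^ 2)

/-- The flux of the transverse energy: the drift `½ A² j` and the Poynting flux `η² 𝓔 B`. -/
noncomputable def transverseEnergyFlux (η : ℝ) (K : ℝ → ℝ) (f : ℝ × ℝ × ℝ → ℝ)
    (A B Etr : ℝ × ℝ → ℝ) (z : ℝ × ℝ) : ℝ :=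
  (1 / 2) * (A z ^ 2 * moment (deriv K) f z) + η ^ 2 * (Etr z * B z)

/-- The longitudinal part `∫ K f dp + (η²/2) E²` of the energy density. The electrostatic energy has
no flux, so its flux is `∫ K v f dp`. -/
noncomputable def longitudinalEnergyDensity (η : ℝ) (K : ℝ → ℝ) (f : ℝ × ℝ × ℝ → ℝ)
    (E : ℝ × ℝ → ℝ) (z : ℝ × ℝ) : ℝ :=
  moment K f z + (η ^ 2 / 2) * E z ^ 2

namespace IsVlasovMaxwellSolution

variable {η P : ℝ} {K : ℝ → ℝ} {f : ℝ × ℝ × ℝ → ℝ} {A B Etr E : ℝ × ℝ → ℝ}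

lemma contDiff_moment (h : IsVlasovMaxwellSolution η P K f A B Etr E) {w : ℝ → ℝ}
    (hw : Continuous w) : ContDiff ℝ 1 (moment w f) :=
  _root_.contDiff_moment h.contDiff_f h.eq_zero_of_le_abs hw

theorem continuity_equation (h : IsVlasovMaxwellSolution η P K f A B Etr E) (hK : ContDiff ℝ 1 K)
    (t x : ℝ) :
    deriv (fun s => moment 1 f (s, x)) t + deriv (fun y => moment (deriv K) f (t, y)) x = 0 := by
  simpa [moment_zero] using vlasov_moment (w := 1) h.contDiff_f h.eq_zero_of_le_abs
    (hK.continuous_deriv le_rfl) contDiff_const (h.vlasov t x)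

theorem kinetic_energy_balance (h : IsVlasovMaxwellSolution η P K f A B Etr E)
    (hK : ContDiff ℝ 1 K) (t x : ℝ) :
    deriv (fun s => moment K f (s, x)) t + deriv (fun y => moment (K * deriv K) f (t, y)) x
      = -(E (t, x) + A (t, x) * B (t, x)) * moment (deriv K) f (t, x) :=
  vlasov_moment h.contDiff_f h.eq_zero_of_le_abs (hK.continuous_deriv le_rfl) hK (h.vlasov t x)

theorem transverse_energy_balance (h : IsVlasovMaxwellSolution η P K f A B Etr E)
    (hK : ContDiff ℝ 1 K) (hη : η ≠ 0) (t x : ℝ) :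
    deriv (fun s => transverseEnergyDensity η f A B Etr (s, x)) t
        + deriv (fun y => transverseEnergyFlux η K f A B Etr (t, y)) x
      = A (t, x) * B (t, x) * moment (deriv K) f (t, x) := by
  have hρ := h.contDiff_moment continuous_one
  have hj := h.contDiff_moment (hK.continuous_deriv le_rfl)
  have deriv_density :=
    (((((hasDerivAt_partial_fst h.contDiff_A t x).fun_pow 2).fun_mul
          (hasDerivAt_partial_fst hρ t x)).const_mul (1 / 2)).fun_add
      ((((hasDerivAt_partial_fst h.contDiff_Etr t x).fun_pow 2).fun_add
          ((hasDerivAt_partial_fst h.contDiff_B t x).fun_pow 2)).const_mul (η ^ 2 / 2))).deriv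
  have deriv_flux :=
    (((((hasDerivAt_partial_snd h.contDiff_A t x).fun_pow 2).fun_mul
          (hasDerivAt_partial_snd hj t x)).const_mul (1 / 2)).fun_add
      (((hasDerivAt_partial_snd h.contDiff_Etr t x).fun_mul
          (hasDerivAt_partial_snd h.contDiff_B t x)).const_mul (η ^ 2))).deriv
  unfold transverseEnergyDensity transverseEnergyFlux
  rw [deriv_density, deriv_flux, h.deriv_time_A, ← h.B_eq_deriv_space_A, h.faraday,
    h.ampere_transverse, ← moment_one]
  field_simp
  linear_combination A (t, x) ^ 2 * h.continuity_equation hK t x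

theorem longitudinal_energy_balance (h : IsVlasovMaxwellSolution η P K f A B Etr E)
    (hK : ContDiff ℝ 1 K) (hη : η ≠ 0) (t x : ℝ) :
    deriv (fun s => longitudinalEnergyDensity η K f E (s, x)) t
        + deriv (fun y => moment (K * deriv K) f (t, y)) x
      = -(A (t, x) * B (t, x) * moment (deriv K) f (t, x)) := by
  have deriv_density :=
    ((hasDerivAt_partial_fst (h.contDiff_moment hK.continuous) t x).fun_add
      (((hasDerivAt_partial_fst h.contDiff_E t x).fun_pow 2).const_mul (η ^ 2 / 2))).deriv
  have ampere : deriv (fun s => E (s, x)) t = η⁻¹ ^ 2 * moment (deriv K) f (t, x) :=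
    h.ampere_longitudinal t x
  unfold longitudinalEnergyDensity
  rw [deriv_density, ampere]
  field_simp
  linear_combination 2 * h.kinetic_energy_balance hK t x

lemma contDiff_transverseEnergyDensity (h : IsVlasovMaxwellSolution η P K f A B Etr E) :
    ContDiff ℝ 1 (transverseEnergyDensity η f A B Etr) := by
  have hA := h.contDiff_A
  have hB := h.contDiff_B
  have hEtr := h.contDiff_Etr
  have hρ := h.contDiff_moment continuous_one
  unfold transverseEnergyDensity
  fun_prop

lemma contDiff_transverseEnergyFlux (h : IsVlasovMaxwellSolution η P K f A B Etr E)
    (hK : ContDiff ℝ 1 K) : ContDiff ℝ 1 (transverseEnergyFlux η K f A B Etr) := by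
  have hA := h.contDiff_A
  have hB := h.contDiff_B
  have hEtr := h.contDiff_Etr
  have hj := h.contDiff_moment (hK.continuous_deriv le_rfl)
  unfold transverseEnergyFlux
  fun_prop

lemma contDiff_longitudinalEnergyDensity (h : IsVlasovMaxwellSolution η P K f A B Etr E)
    (hK : Continuous K) : ContDiff ℝ 1 (longitudinalEnergyDensity η K f E) := by
  have hE := h.contDiff_E
  have hk := h.contDiff_moment hK
  unfold longitudinalEnergyDensity
  fun_prop

lemma totalEnergy_eq_integral (h : IsVlasovMaxwellSolution η P K f A B Etr E) (hK : Continuous K)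
    (L t : ℝ) :
    totalEnergy η L K f A B Etr E t = ∫ x in (0 : ℝ)..L,
      (transverseEnergyDensity η f A B Etr + longitudinalEnergyDensity η K f E) (t, x) := by
  have hA := h.contDiff_A.continuous
  have hB := h.contDiff_B.continuous
  have hEtr := h.contDiff_Etr.continuous
  have hE := h.contDiff_E.continuous
  have hρ := (h.contDiff_moment continuous_one).continuous
  have hk := (h.contDiff_moment hK).continuous
  simp only [Pi.add_apply, transverseEnergyDensity, longitudinalEnergyDensity]
  repeat rw [intervalIntegral.integral_add (Continuous.intervalIntegrable (by fun_prop) _ _)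
    (Continuous.intervalIntegrable (by fun_prop) _ _)]
  simp only [intervalIntegral.integral_const_mul, moment_one, totalEnergy, ← add_assoc]
  rfl

end IsVlasovMaxwellSolution

theorem total_energy_conservation_general {η P L : ℝ} {K : ℝ → ℝ} {f : ℝ × ℝ × ℝ → ℝ}
    {A B Etr E : ℝ × ℝ → ℝ} (hK : ContDiff ℝ 1 K) (hη : η ≠ 0)
    (h : IsVlasovMaxwellSolution η P K f A B Etr E)
    (hf : ∀ t p, Function.Periodic (fun x => f (t, x, p)) L)
    (hA : ∀ t, Function.Periodic (fun x => A (t, x)) L)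
    (hB : ∀ t, Function.Periodic (fun x => B (t, x)) L)
    (hEtr : ∀ t, Function.Periodic (fun x => Etr (t, x)) L) (t₁ t₂ : ℝ) :
    totalEnergy η L K f A B Etr E t₁ = totalEnergy η L K f A B Etr E t₂ := by
  have hdensity_tr := h.contDiff_transverseEnergyDensity
  have hdensity_lo := h.contDiff_longitudinalEnergyDensity hK.continuous
  have hflux_tr := h.contDiff_transverseEnergyFlux hK
  have hflux_lo := h.contDiff_moment (hK.continuous.mul (hK.continuous_deriv le_rfl))
  simp only [h.totalEnergy_eq_integral hK.continuous]
  refine intervalIntegral_eq_of_conservation_law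
    (g := transverseEnergyFlux η K f A B Etr + moment (K * deriv K) f)
    (hdensity_tr.add hdensity_lo) (hflux_tr.add hflux_lo) (fun t x => ?_) (fun t => ?_) t₁ t₂
  · simp only [Pi.add_apply]
    rw [deriv_fun_add, deriv_fun_add]
    · linear_combination h.transverse_energy_balance hK hη t x
        + h.longitudinal_energy_balance hK hη t x
    all_goals exact ContDiff.differentiable (n := 1) (by fun_prop) one_ne_zero _
  · simp only [Pi.add_apply, transverseEnergyFlux, (hA t).eq, (hB t).eq, (hEtr t).eq,
      (periodic_moment _ hf t).eq]

/-- The kinetic energy `√(1+p²) - 1` of a particle of momentum `p`, whose derivative is the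
relativistic velocity `p/√(1+p²)`. -/
noncomputable def relativisticKineticEnergy (p : ℝ) : ℝ :=
  Real.sqrt (1 + p ^ 2) - 1

lemma contDiff_relativisticKineticEnergy {n : WithTop ℕ∞} :
    ContDiff ℝ n relativisticKineticEnergy :=
  (ContDiff.sqrt (by fun_prop) fun p => by positivity).sub contDiff_const

lemma hasDerivAt_relativisticKineticEnergy (p : ℝ) :
    HasDerivAt relativisticKineticEnergy (p / Real.sqrt (1 + p ^ 2)) p := by
  have hderiv := (((hasDerivAt_pow 2 p).const_add 1).sqrt (by positivity)).sub_const 1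
  refine hderiv.congr_deriv ?_
  simp only [Nat.cast_ofNat, Nat.add_one_sub_one, pow_one]
  exact mul_div_mul_left _ _ two_ne_zero

/-- Conservation of the total energy (transverse kinetic + transverse potential
+ longitudinal kinetic + longitudinal potential) for the quasi-relativistic
Vlasov–Maxwell system. -/
theorem total_energy_conservation
    (η : ℝ) (hη : 0 < η)
    (v : ℝ → ℝ) (hv : ∀ p : ℝ, v p = p / Real.sqrt (1 + p ^ 2))
    (f : ℝ × ℝ × ℝ → ℝ) (hf : ContDiff ℝ 1 f)
    (hfper : ∀ t x p : ℝ, f (t, x + 1, p) = f (t, x, p))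
    (P : ℝ) (hP : 0 < P)
    (hsupp : ∀ t x p : ℝ, P ≤ |p| → f (t, x, p) = 0)
    (A B Etr E : ℝ × ℝ → ℝ)
    (hA : ContDiff ℝ 1 A) (hB : ContDiff ℝ 1 B)
    (hEtr : ContDiff ℝ 1 Etr) (hE : ContDiff ℝ 1 E)
    (hAper : ∀ t x : ℝ, A (t, x + 1) = A (t, x))
    (hBper : ∀ t x : ℝ, B (t, x + 1) = B (t, x))
    (hEtrper : ∀ t x : ℝ, Etr (t, x + 1) = Etr (t, x))
    (hEper : ∀ t x : ℝ, E (t, x + 1) = E (t, x))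
    (hPDE : ∀ t x p : ℝ,
      deriv (fun s => f (s, x, p)) t
        + v p * deriv (fun y => f (t, y, p)) x
        + (-(E (t, x) + A (t, x) * B (t, x))) * deriv (fun q => f (t, x, q)) p
        = 0)
    (hAt : ∀ t x : ℝ, deriv (fun s => A (s, x)) t = -Etr (t, x))
    (hBdef : ∀ t x : ℝ, B (t, x) = deriv (fun y => A (t, y)) x)
    (hBt : ∀ t x : ℝ,
      deriv (fun s => B (s, x)) t = -deriv (fun y => Etr (t, y)) x)
    (hEtrt : ∀ t x : ℝ,
      deriv (fun s => Etr (s, x)) t =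
        η⁻¹ ^ 2 * A (t, x) * (∫ p : ℝ, f (t, x, p))
          - deriv (fun y => B (t, y)) x)
    (hAmpere : ∀ t x : ℝ,
      deriv (fun s => E (s, x)) t =
        η⁻¹ ^ 2 * ∫ p : ℝ, v p * f (t, x, p)) :
    ∀ t₁ t₂ : ℝ,
      ((1 / 2) * (∫ x in (0:ℝ)..1, A (t₁, x) ^ 2 * ∫ p : ℝ, f (t₁, x, p))
        + (η ^ 2 / 2) * (∫ x in (0:ℝ)..1, (Etr (t₁, x) ^ 2 + B (t₁, x) ^ 2))
        + (∫ x in (0:ℝ)..1, ∫ p : ℝ, (Real.sqrt (1 + p ^ 2) - 1) * f (t₁, x, p))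
        + (η ^ 2 / 2) * ∫ x in (0:ℝ)..1, E (t₁, x) ^ 2)
      = ((1 / 2) * (∫ x in (0:ℝ)..1, A (t₂, x) ^ 2 * ∫ p : ℝ, f (t₂, x, p))
        + (η ^ 2 / 2) * (∫ x in (0:ℝ)..1, (Etr (t₂, x) ^ 2 + B (t₂, x) ^ 2))
        + (∫ x in (0:ℝ)..1, ∫ p : ℝ, (Real.sqrt (1 + p ^ 2) - 1) * f (t₂, x, p))
        + (η ^ 2 / 2) * ∫ x in (0:ℝ)..1, E (t₂, x) ^ 2) := by
  obtain rfl : v = deriv relativisticKineticEnergy :=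
    funext fun p => (hv p).trans (hasDerivAt_relativisticKineticEnergy p).deriv.symm
  exact total_energy_conservation_general contDiff_relativisticKineticEnergy hη.ne'
    ⟨hf, hsupp, hA, hB, hEtr, hE, hPDE, hAt, hBdef, hBt, hEtrt, hAmpere⟩
    (fun t p x => hfper t x p) hAper hBper hEtrper
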